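/- The split-among-stations model always provides a solution that is better than, or equally good as, the integrated model: for every feasible solution of the integrated model there exists a feasible solution of the split-among-stations model whose objective value ∑_{p∈P} ∑_{s∈S} x_{ps} + W_u · ∑_{s∈S} u_s is less than or equal to that of the given integrated solution; consequently, the infimum (in ℕ) of the set of objective values attained by feasible solutions of the split-among-stations model is less than or equal to the infimum of the set of objective values attained by feasible solutions of the integrated model. -/

import Mathlib

open Finset

/-- Feasibility of the INTEGRATED pick-order-assignment / pick-pod-selection model:
binary variables `x` (pods to stations), `y` (orders to stations),
`z` (order lines to stations, meaningful for `i ∈ Io o`), and slack `u : S → ℕ`,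
satisfying constraints (i)–(v). -/
def IntegratedFeasible {S O P I : Type*} [Fintype S] [Fintype O]
    (Io : O → Finset I) (Pi : I → Finset P) (Ps : S → Finset P) (C : S → ℕ)
    (x : P → S → ℕ) (y : O → S → ℕ) (z : I → O → S → ℕ) (u : S → ℕ) : Prop :=
  (∀ p s, x p s ≤ 1) ∧
  (∀ o s, y o s ≤ 1) ∧
  (∀ o : O, ∀ i ∈ Io o, ∀ s : S, z i o s ≤ 1) ∧
  -- (i) y_{os} = y_{ios}
  (∀ o : O, ∀ i ∈ Io o, ∀ s : S, y o s = z i o s) ∧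
  -- (ii) ∑_s y_{os} ≤ 1
  (∀ o : O, ∑ s : S, y o s ≤ 1) ∧
  -- (iii) ∑_o ∑_{i∈I_o} y_{ios} + u_s = C_s
  (∀ s : S, (∑ o : O, ∑ i ∈ Io o, z i o s) + u s = C s) ∧
  -- (iv) ∑_{p∈P_i} x_{ps} ≥ y_{ios}
  (∀ o : O, ∀ i ∈ Io o, ∀ s : S, z i o s ≤ ∑ p ∈ Pi i, x p s) ∧
  -- (v) x_{ps} = 1 for p currently at s
  (∀ s : S, ∀ p ∈ Ps s, x p s = 1)

/-- Feasibility of the SPLIT-AMONG-STATIONS model: additionally binary `yo`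
(order active) and nonnegative integers `e` (extra stations), satisfying
(iii), (iv), (v), (i'), (ii'), (vi), (vii), (viii). -/
def SplitFeasible {S O P I : Type*} [Fintype S] [Fintype O]
    (Io : O → Finset I) (Pi : I → Finset P) (Ps : S → Finset P) (C : S → ℕ)
    (x : P → S → ℕ) (y : O → S → ℕ) (z : I → O → S → ℕ) (u : S → ℕ)
    (yo : O → ℕ) (e : O → ℕ) : Prop :=
  (∀ p s, x p s ≤ 1) ∧
  (∀ o s, y o s ≤ 1) ∧
  (∀ o : O, ∀ i ∈ Io o, ∀ s : S, z i o s ≤ 1) ∧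
  (∀ o : O, yo o ≤ 1) ∧
  -- (iii)
  (∀ s : S, (∑ o : O, ∑ i ∈ Io o, z i o s) + u s = C s) ∧
  -- (iv)
  (∀ o : O, ∀ i ∈ Io o, ∀ s : S, z i o s ≤ ∑ p ∈ Pi i, x p s) ∧
  -- (v)
  (∀ s : S, ∀ p ∈ Ps s, x p s = 1) ∧
  -- (i') y_{os} ≥ y_{ios}
  (∀ o : O, ∀ i ∈ Io o, ∀ s : S, z i o s ≤ y o s) ∧
  -- (ii') ∑_s y_{os} ≥ y_o
  (∀ o : O, yo o ≤ ∑ s : S, y o s) ∧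
  -- (vi) ∑_s y_{ios} = y_o
  (∀ o : O, ∀ i ∈ Io o, ∑ s : S, z i o s = yo o) ∧
  -- (vii) y_o ≥ y_{os}
  (∀ o : O, ∀ s : S, y o s ≤ yo o) ∧
  -- (viii) ∑_{i∈I_o} y_{ios} ≥ y_{os}
  (∀ o : O, ∀ s : S, y o s ≤ ∑ i ∈ Io o, z i o s)

/-- Feasibility of the SPLIT-OVER-TIME model: additionally binary `yb`
(order line moved back to backlog), satisfying (iii), (iv), (v), (i'),
(ii'), (vii), (viii) and (vi'). -/
def TimeSplitFeasible {S O P I : Type*} [Fintype S] [Fintype O]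
    (Io : O → Finset I) (Pi : I → Finset P) (Ps : S → Finset P) (C : S → ℕ)
    (x : P → S → ℕ) (y : O → S → ℕ) (z : I → O → S → ℕ) (u : S → ℕ)
    (yo : O → ℕ) (e : O → ℕ) (yb : I → O → ℕ) : Prop :=
  (∀ p s, x p s ≤ 1) ∧
  (∀ o s, y o s ≤ 1) ∧
  (∀ o : O, ∀ i ∈ Io o, ∀ s : S, z i o s ≤ 1) ∧
  (∀ o : O, yo o ≤ 1) ∧
  (∀ o : O, ∀ i ∈ Io o, yb i o ≤ 1) ∧
  -- (iii)
  (∀ s : S, (∑ o : O, ∑ i ∈ Io o, z i o s) + u s = C s) ∧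
  -- (iv)
  (∀ o : O, ∀ i ∈ Io o, ∀ s : S, z i o s ≤ ∑ p ∈ Pi i, x p s) ∧
  -- (v)
  (∀ s : S, ∀ p ∈ Ps s, x p s = 1) ∧
  -- (i')
  (∀ o : O, ∀ i ∈ Io o, ∀ s : S, z i o s ≤ y o s) ∧
  -- (ii')
  (∀ o : O, yo o ≤ ∑ s : S, y o s) ∧
  -- (vii)
  (∀ o : O, ∀ s : S, y o s ≤ yo o) ∧
  -- (viii)
  (∀ o : O, ∀ s : S, y o s ≤ ∑ i ∈ Io o, z i o s) ∧
  -- (vi') ∑_s y_{ios} + y^b_{io} = y_o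
  (∀ o : O, ∀ i ∈ Io o, (∑ s : S, z i o s) + yb i o = yo o)

/-- Objective value: ∑_p ∑_s x_{ps} + W_u · ∑_s u_s. -/
def objectiveValue {S P : Type*} [Fintype S] [Fintype P]
    (Wu : ℕ) (x : P → S → ℕ) (u : S → ℕ) : ℕ :=
  (∑ p : P, ∑ s : S, x p s) + Wu * ∑ s : S, u s

/-!
An integrated solution is already a split-among-stations solution with the same pods and slacks:
call an order active, `y_o = ∑_s y_{os}`, exactly when it is assigned to a station. Since all lines
of an order follow the order, each line is processed exactly `y_o` times, and no station is assigned
an order without processing one of its lines, because every order has a line.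
-/

section Models

variable {S O P I : Type*} [Fintype S] [Fintype O]
  {Io : O → Finset I} {Pi : I → Finset P} {Ps : S → Finset P} {C : S → ℕ}

theorem IntegratedFeasible.splitFeasible {x : P → S → ℕ} {y : O → S → ℕ} {z : I → O → S → ℕ}
    {u : S → ℕ} (h : IntegratedFeasible Io Pi Ps C x y z u) (hIo : ∀ o, (Io o).Nonempty)
    (e : O → ℕ) :
    SplitFeasible Io Pi Ps C x y z u (fun o ↦ ∑ s, y o s) e := by
  obtain ⟨x_le_one, y_le_one, z_le_one, y_eq_z, sum_y_le_one, capacity, pods, present⟩ := h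
  have line_le_order : ∀ o, ∀ i ∈ Io o, ∀ s, z i o s ≤ y o s :=
    fun o i hi s ↦ (y_eq_z o i hi s).ge
  have sum_line_eq_sum_order : ∀ o, ∀ i ∈ Io o, ∑ s, z i o s = ∑ s, y o s :=
    fun o i hi ↦ sum_congr rfl fun s _ ↦ (y_eq_z o i hi s).symm
  have order_le_active : ∀ o s, y o s ≤ ∑ s', y o s' :=
    fun o s ↦ single_le_sum_of_canonicallyOrdered (mem_univ s)
  have order_le_sum_lines : ∀ o s, y o s ≤ ∑ i ∈ Io o, z i o s := by
    intro o s
    obtain ⟨i, hi⟩ := hIo o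
    calc
      y o s = z i o s := y_eq_z o i hi s
      _ ≤ ∑ j ∈ Io o, z j o s :=
        single_le_sum_of_canonicallyOrdered (f := fun j ↦ z j o s) hi
  exact ⟨x_le_one, y_le_one, z_le_one, sum_y_le_one, capacity, pods, present, line_le_order,
    fun _ ↦ le_rfl, sum_line_eq_sum_order, order_le_active, order_le_sum_lines⟩

theorem integratedFeasible_unassigned (Io : O → Finset I) (Pi : I → Finset P)
    (Ps : S → Finset P) (C : S → ℕ) :
    IntegratedFeasible Io Pi Ps C (fun _ _ ↦ 1) (fun _ _ ↦ 0) (fun _ _ _ ↦ 0) C := by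
  simp [IntegratedFeasible]

variable [Fintype P]

/-- The objective values attained by the integrated model; its infimum in `ℕ` is the optimal
value. -/
def integratedValues (Io : O → Finset I) (Pi : I → Finset P) (Ps : S → Finset P) (C : S → ℕ)
    (Wu : ℕ) : Set ℕ :=
  {v | ∃ (x : P → S → ℕ) (y : O → S → ℕ) (z : I → O → S → ℕ) (u : S → ℕ),
    IntegratedFeasible Io Pi Ps C x y z u ∧ objectiveValue Wu x u = v}

/-- The objective values attained by the split-among-stations model; its infimum in `ℕ` is the
optimal value. -/
def splitValues (Io : O → Finset I) (Pi : I → Finset P) (Ps : S → Finset P) (C : S → ℕ)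
    (Wu : ℕ) : Set ℕ :=
  {v | ∃ (x : P → S → ℕ) (y : O → S → ℕ) (z : I → O → S → ℕ) (u : S → ℕ) (yo : O → ℕ)
      (e : O → ℕ),
    SplitFeasible Io Pi Ps C x y z u yo e ∧ objectiveValue Wu x u = v}

theorem integratedValues_subset_splitValues (hIo : ∀ o, (Io o).Nonempty) (Wu : ℕ) :
    integratedValues Io Pi Ps C Wu ⊆ splitValues Io Pi Ps C Wu := by
  rintro v ⟨x, y, z, u, h, hv⟩
  exact ⟨x, y, z, u, _, 0, h.splitFeasible hIo 0, hv⟩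

theorem integratedValues_nonempty (Io : O → Finset I) (Pi : I → Finset P) (Ps : S → Finset P)
    (C : S → ℕ) (Wu : ℕ) : (integratedValues Io Pi Ps C Wu).Nonempty :=
  ⟨_, _, _, _, _, integratedFeasible_unassigned Io Pi Ps C, rfl⟩

end Models

/-- The split-among-stations model always provides a solution that
is better than, or equally good as, the integrated model; consequently the
infimum of split-among-stations objective values is at most the infimum of
integrated objective values. -/
theorem split_among_stations_at_least_as_good_as_integrated
    {S O P I : Type*} [Fintype S] [Fintype O] [Fintype P]
    (Io : O → Finset I) (Pi : I → Finset P) (Ps : S → Finset P) (C : S → ℕ)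
    (Wu : ℕ) (hWu : 0 < Wu)
    (hIo : ∀ o : O, (Io o).Nonempty) :
    (∀ (x : P → S → ℕ) (y : O → S → ℕ) (z : I → O → S → ℕ) (u : S → ℕ),
        IntegratedFeasible Io Pi Ps C x y z u →
        ∃ (x' : P → S → ℕ) (y' : O → S → ℕ) (z' : I → O → S → ℕ) (u' : S → ℕ)
          (yo : O → ℕ) (e : O → ℕ),
          SplitFeasible Io Pi Ps C x' y' z' u' yo e ∧
            objectiveValue Wu x' u' ≤ objectiveValue Wu x u) ∧
      sInf {v : ℕ | ∃ (x : P → S → ℕ) (y : O → S → ℕ) (z : I → O → S → ℕ)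
              (u : S → ℕ) (yo : O → ℕ) (e : O → ℕ),
              SplitFeasible Io Pi Ps C x y z u yo e ∧ objectiveValue Wu x u = v}
        ≤ sInf {v : ℕ | ∃ (x : P → S → ℕ) (y : O → S → ℕ) (z : I → O → S → ℕ)
              (u : S → ℕ),
              IntegratedFeasible Io Pi Ps C x y z u ∧ objectiveValue Wu x u = v} := by
  refine ⟨fun x y z u h ↦ ⟨x, y, z, u, _, 0, h.splitFeasible hIo 0, le_rfl⟩, ?_⟩
  -- Nonemptiness matters: `sInf ∅ = 0` in `ℕ`.
  exact csInf_le_csInf (OrderBot.bddBelow _) (integratedValues_nonempty Io Pi Ps C Wu)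
    (integratedValues_subset_splitValues hIo Wu)
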